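/- The conductance of the Gibbs sampler Markov chain for any discrete k-DPP is at least 1/(Ck²) for an absolute constant C, independent of the size n of the ground set. -/

import Mathlib

open Finset

/-- Determinant of the principal submatrix of `L` indexed by the finite set `S`. -/
noncomputable def gramDet {n : ℕ} (L : Matrix (Fin n) (Fin n) ℝ)
    (S : Finset (Fin n)) : ℝ :=
  Matrix.det (Matrix.of (fun i j : {x // x ∈ S} => L i.1 j.1))

/-- The `k`-DPP distribution on size-`k` subsets: `π(S) ∝ det(L_S)`. -/
noncomputable def dpp {n : ℕ} (L : Matrix (Fin n) (Fin n) ℝ) (k : ℕ)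
    (S : Finset (Fin n)) : ℝ :=
  if S.card = k then
    gramDet L S / ∑ T ∈ univ.filter (fun T : Finset (Fin n) => T.card = k), gramDet L T
  else 0

/-- Normalizing constant of the conditional distribution given the `(k−1)`-set `I`:
`π(I) = Σ_{j ∉ I} π(I ∪ {j})`. -/
noncomputable def condZ {n : ℕ} (π : Finset (Fin n) → ℝ) (I : Finset (Fin n)) : ℝ :=
  ∑ j ∈ Iᶜ, π (insert j I)

/-- Transition density of the Gibbs sampler for a `k`-DPP `π`: remove a uniformly
random element `i` of the current state `x` and resample a replacement `j` with
probability proportional to `π(x − i + j)`. -/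
noncomputable def gibbsP {n : ℕ} (π : Finset (Fin n) → ℝ) (k : ℕ)
    (x y : Finset (Fin n)) : ℝ :=
  (1 / (k : ℝ)) *
    ∑ i ∈ x, (if x.erase i ⊆ y ∧ y.card = k then π y / condZ π (x.erase i) else 0)

/-- Ergodic flow between two families of states: `Q(A,B) = Σ_{a∈A,b∈B} π(a)P(a,b)`. -/
noncomputable def flow {n : ℕ} (π : Finset (Fin n) → ℝ) (k : ℕ)
    (A B : Finset (Finset (Fin n))) : ℝ :=
  ∑ a ∈ A, ∑ b ∈ B, π a * gibbsP π k a b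

/-!
Call a `k`-homogeneous weight on sets strongly log-concave if the Hessians of its generating
polynomial and of all derivatives of that polynomial satisfy the reversed Cauchy–Schwarz
inequality at the all-ones point. Differentiating corresponds to passing to a link, and the
chi-square divergences of the links add up to that of the weight, so this local condition shows by
induction on `k` that one down step contracts the chi-square divergence by the factor `1 - 1 / k`.
Applied to an event of mass `p` it bounds the flow out of the event below by `p * (1 - p) / k`.

The links of the determinantal weight of `L` are the determinantal weights of its Schur complements,
which are again positive semidefinite. In degree two the reversed Cauchy–Schwarz inequality
follows from the positive semidefiniteness of `L ⊙ L` (Schur product theorem); for positive weights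
it propagates from the links to higher degrees by trickling down, and singular `L` are limits of
positive definite matrices.
-/

namespace GibbsSampler

open scoped Matrix

section LinearAlgebra

variable {α : Type*} [Fintype α]

lemma dotProduct_mulVec_comm_of_isSymm {A : Matrix α α ℝ} (hA : A.IsSymm) (x y : α → ℝ) :
    x ⬝ᵥ A *ᵥ y = y ⬝ᵥ A *ᵥ x := by
  rw [Matrix.dotProduct_mulVec, ← Matrix.mulVec_transpose, hA.eq, dotProduct_comm]

lemma mul_dotProduct_mulVec_le_sq_of_hyperplane {A : Matrix α α ℝ} (hA : A.IsSymm)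
    {u d : α → ℝ} (hu : 0 ≤ u ⬝ᵥ A *ᵥ u) (hd : ∀ x, d ⬝ᵥ x = 0 → x ⬝ᵥ A *ᵥ x ≤ 0)
    (g : α → ℝ) : (u ⬝ᵥ A *ᵥ u) * (g ⬝ᵥ A *ᵥ g) ≤ (u ⬝ᵥ A *ᵥ g) ^ 2 := by
  by_cases hdu : d ⬝ᵥ u = 0
  · rw [le_antisymm (hd u hdu) hu, zero_mul]
    positivity
  · set t := d ⬝ᵥ g / d ⬝ᵥ u
    have hproj : d ⬝ᵥ (g - t • u) = 0 := by
      rw [dotProduct_sub, dotProduct_smul, smul_eq_mul, div_mul_cancel₀ _ hdu, sub_self]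
    have hexpand : (g - t • u) ⬝ᵥ A *ᵥ (g - t • u)
        = g ⬝ᵥ A *ᵥ g - 2 * t * (u ⬝ᵥ A *ᵥ g) + t ^ 2 * (u ⬝ᵥ A *ᵥ u) := by
      simp only [Matrix.mulVec_sub, Matrix.mulVec_smul, dotProduct_sub, sub_dotProduct,
        dotProduct_smul, smul_dotProduct, smul_eq_mul, dotProduct_mulVec_comm_of_isSymm hA g u]
      ring
    have hneg := hd _ hproj
    rw [hexpand] at hneg
    linarith [mul_nonpos_of_nonneg_of_nonpos hu hneg,
      sq_nonneg (u ⬝ᵥ A *ᵥ g - t * (u ⬝ᵥ A *ᵥ u))]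

lemma dotProduct_mulVec_nonpos_of_eigenvectors {B : Matrix α α ℝ} (hB : B.IsSymm) {g : α → ℝ}
    (h : ∀ (μ : ℝ) (v : α → ℝ), 0 < μ → B *ᵥ v = μ • v → v ⬝ᵥ g = 0) :
    g ⬝ᵥ B *ᵥ g ≤ 0 := by
  classical
  have hH : B.IsHermitian := by
    rw [Matrix.IsHermitian, Matrix.conjTranspose_eq_transpose_of_trivial, hB.eq]
  set v : α → α → ℝ := fun j => (hH.eigenvectorBasis j).ofLp
  have hv (j : α) : B *ᵥ v j = hH.eigenvalues j • v j := hH.mulVec_eigenvectorBasis j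
  have hparseval (x y : α → ℝ) : x ⬝ᵥ y = ∑ j, (v j ⬝ᵥ x) * (v j ⬝ᵥ y) := by
    have := hH.eigenvectorBasis.sum_inner_mul_inner (WithLp.toLp 2 x) (WithLp.toLp 2 y)
    simpa [EuclideanSpace.inner_eq_star_dotProduct, v, dotProduct_comm] using this.symm
  have hspectral : g ⬝ᵥ B *ᵥ g = ∑ j, hH.eigenvalues j * (v j ⬝ᵥ g) ^ 2 := by
    rw [hparseval]
    refine Finset.sum_congr rfl fun j _ => ?_
    rw [dotProduct_mulVec_comm_of_isSymm hB (v j), hv, dotProduct_smul, dotProduct_comm g,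
      smul_eq_mul]
    ring
  rw [hspectral]
  refine Finset.sum_nonpos fun j _ => ?_
  rcases le_or_gt (hH.eigenvalues j) 0 with hj | hj
  · exact mul_nonpos_of_nonpos_of_nonneg hj (sq_nonneg _)
  · rw [h _ _ hj (hv j)]
    norm_num

lemma dotProduct_mulVec_nonpos_of_generalized_eigenvectors {A : Matrix α α ℝ} (hA : A.IsSymm)
    {d g : α → ℝ} (hd : ∀ i, 0 < d i)
    (h : ∀ (μ : ℝ) (x : α → ℝ), 0 < μ → A *ᵥ x = μ • (d * x) → (d * x) ⬝ᵥ g = 0) :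
    g ⬝ᵥ A *ᵥ g ≤ 0 := by
  classical
  set s : α → ℝ := fun i => √(d i)
  have hs (i : α) : s i ≠ 0 := (Real.sqrt_pos.2 (hd i)).ne'
  have hsd : s * s = d := funext fun i => Real.mul_self_sqrt (hd i).le
  let B : Matrix α α ℝ := .of fun i j => A i j / (s i * s j)
  have hBA (x : α → ℝ) : B *ᵥ (s * x) = (A *ᵥ x) / s := by
    ext i
    simp only [B, Matrix.mulVec, dotProduct, Matrix.of_apply, Pi.mul_apply, Pi.div_apply,
      Finset.sum_div]
    refine Finset.sum_congr rfl fun j _ => ?_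
    field_simp [hs i, hs j]
  have hquad : (s * g) ⬝ᵥ B *ᵥ (s * g) = g ⬝ᵥ A *ᵥ g := by
    rw [hBA]
    refine Finset.sum_congr rfl fun i _ => ?_
    simp only [Pi.mul_apply, Pi.div_apply]
    field_simp [hs i]
  rw [← hquad]
  refine dotProduct_mulVec_nonpos_of_eigenvectors
    (Matrix.IsSymm.ext fun i j => by simp only [B, Matrix.of_apply, hA.apply i j, mul_comm])
    fun μ v hμ hv => ?_
  have hvs : s * (v / s) = v := funext fun i => mul_div_cancel₀ _ (hs i)
  have hx : A *ᵥ (v / s) = μ • (d * (v / s)) := by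
    have hdiv : (A *ᵥ (v / s)) / s = μ • v := by rw [← hBA, hvs, hv]
    rw [← hsd, mul_assoc, hvs, mul_comm s, ← smul_mul_assoc, ← hdiv]
    exact funext fun i => (div_mul_cancel₀ _ (hs i)).symm
  rw [← h μ (v / s) hμ hx, ← hsd, mul_assoc, hvs]
  exact Finset.sum_congr rfl fun i _ => by simp only [Pi.mul_apply]; ring

lemma sum_mul_sq_sub_eq {A : Matrix α α ℝ} (hA : A.IsSymm) (x : α → ℝ) :
    ∑ i, ∑ j, A i j * (x i - x j) ^ 2 = 2 * ((A *ᵥ 1) ⬝ᵥ x ^ 2 - x ⬝ᵥ A *ᵥ x) := by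
  have hleft : (A *ᵥ 1) ⬝ᵥ x ^ 2 = ∑ i, ∑ j, A i j * x i ^ 2 := by
    simp only [Matrix.mulVec, dotProduct, Pi.one_apply, mul_one, Finset.sum_mul, Pi.pow_apply]
  have hright : (A *ᵥ 1) ⬝ᵥ x ^ 2 = ∑ i, ∑ j, A i j * x j ^ 2 := by
    rw [hleft, Finset.sum_comm]
    simp only [hA.apply]
  have hcross : x ⬝ᵥ A *ᵥ x = ∑ i, ∑ j, A i j * (x i * x j) := by
    simp only [dotProduct, Matrix.mulVec, Finset.mul_sum]
    exact Finset.sum_congr rfl fun i _ => Finset.sum_congr rfl fun j _ => by ring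
  rw [mul_sub, two_mul]
  nth_rw 1 [hleft]
  rw [hright, hcross, Finset.mul_sum]
  simp only [Finset.mul_sum, ← Finset.sum_add_distrib, ← Finset.sum_sub_distrib]
  exact Finset.sum_congr rfl fun i _ => Finset.sum_congr rfl fun j _ => by ring

lemma eq_of_dotProduct_sq_le {A : Matrix α α ℝ} (hA : A.IsSymm)
    (hpos : ∀ i j, i ≠ j → 0 < A i j) {x : α → ℝ} (hx : (A *ᵥ 1) ⬝ᵥ x ^ 2 ≤ x ⬝ᵥ A *ᵥ x)
    (i j : α) : x i = x j := by
  by_contra hij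
  have hterm (a b : α) : 0 ≤ A a b * (x a - x b) ^ 2 := by
    rcases eq_or_ne a b with rfl | hab
    · simp
    · exact mul_nonneg (hpos a b hab).le (sq_nonneg _)
  have hlt : 0 < ∑ a, ∑ b, A a b * (x a - x b) ^ 2 := by
    refine Finset.sum_pos' (fun a _ => Finset.sum_nonneg fun b _ => hterm a b)
      ⟨i, Finset.mem_univ i, Finset.sum_pos' (fun b _ => hterm i b) ⟨j, Finset.mem_univ j, ?_⟩⟩
    exact mul_pos (hpos i j (ne_of_apply_ne x hij)) (sq_pos_of_ne_zero (sub_ne_zero.2 hij))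
  rw [sum_mul_sq_sub_eq hA] at hlt
  linarith

/-- Relative to `d = A 1`, the hypothesis `h` forces every generalized eigenvalue `μ` of `A` to
satisfy `μ ≤ μ ^ 2`, and by connectivity only the constants have `μ ≥ 1`. -/
lemma dotProduct_mulVec_nonpos_of_trickle_down {A : Matrix α α ℝ} (hA : A.IsSymm)
    (hpos : ∀ i j, i ≠ j → 0 < A i j) (hd : ∀ i, 0 < (A *ᵥ 1) i)
    (h : ∀ x, x ⬝ᵥ A *ᵥ x ≤ ∑ i, (A *ᵥ x) i ^ 2 / (A *ᵥ 1) i)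
    {g : α → ℝ} (hg : (A *ᵥ 1) ⬝ᵥ g = 0) : g ⬝ᵥ A *ᵥ g ≤ 0 := by
  set d := A *ᵥ 1
  refine dotProduct_mulVec_nonpos_of_generalized_eigenvectors hA hd fun μ x hμ hx => ?_
  set E := d ⬝ᵥ x ^ 2
  have hquad : x ⬝ᵥ A *ᵥ x = μ * E := by
    rw [hx, dotProduct_smul, smul_eq_mul]
    congr 1
    exact Finset.sum_congr rfl fun i _ => by simp only [Pi.mul_apply, Pi.pow_apply]; ring
  have hsq : ∑ i, (A *ᵥ x) i ^ 2 / d i = μ ^ 2 * E := by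
    simp only [hx, E, dotProduct, Finset.mul_sum]
    refine Finset.sum_congr rfl fun i _ => ?_
    simp only [Pi.mul_apply, Pi.smul_apply, Pi.pow_apply, smul_eq_mul]
    field_simp [(hd i).ne']
  have hconst (i j : α) : x i = x j := by
    refine eq_of_dotProduct_sq_le hA hpos ?_ i j
    have hle : μ * E ≤ μ * (μ * E) := by
      rw [← mul_assoc, ← sq, ← hquad, ← hsq]
      exact h x
    rw [hquad]
    exact le_of_mul_le_mul_left hle hμ
  rcases isEmpty_or_nonempty α with _ | ⟨⟨i⟩⟩
  · simp [dotProduct]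
  · have hscal : d * x = x i • d := by
      ext j
      rw [Pi.mul_apply, hconst j i, Pi.smul_apply, smul_eq_mul, mul_comm]
    rw [hscal, smul_dotProduct, hg, smul_zero]

end LinearAlgebra

section LevelSum

variable {α : Type*} [Fintype α]

/-- The total weight of the finite sets of size `k`. -/
def levelSum (φ : Finset α → ℝ) (k : ℕ) : ℝ :=
  ∑ S ∈ Finset.powersetCard k Finset.univ, φ S

lemma levelSum_congr {φ ψ : Finset α → ℝ} {k : ℕ} (h : ∀ S, S.card = k → φ S = ψ S) :
    levelSum φ k = levelSum ψ k :=
  Finset.sum_congr rfl fun S hS => h S (Finset.mem_powersetCard_univ.1 hS)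

lemma levelSum_nonneg {φ : Finset α → ℝ} (hφ : 0 ≤ φ) (k : ℕ) : 0 ≤ levelSum φ k :=
  Finset.sum_nonneg fun S _ => hφ S

lemma levelSum_smul (c : ℝ) (φ : Finset α → ℝ) (k : ℕ) :
    levelSum (c • φ) k = c * levelSum φ k :=
  (Finset.mul_sum ..).symm

lemma levelSum_zero (φ : Finset α → ℝ) : levelSum φ 0 = φ ∅ := by
  simp [levelSum]

lemma levelSum_sum {ι : Type*} (s : Finset ι) (φ : ι → Finset α → ℝ) (k : ℕ) :
    ∑ i ∈ s, levelSum (φ i) k = levelSum (fun S => ∑ i ∈ s, φ i S) k :=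
  Finset.sum_comm

end LevelSum

section Link

variable {α : Type*} [DecidableEq α]

/-- The link of a weight function `φ` on finite sets at `i`: it gives `T ∌ i` the weight of
`insert i T`, and sets containing `i` the weight zero. -/
def link (φ : Finset α → ℝ) (i : α) (T : Finset α) : ℝ :=
  if i ∈ T then 0 else φ (insert i T)

lemma link_of_notMem {φ : Finset α → ℝ} {i : α} {T : Finset α} (hi : i ∉ T) :
    link φ i T = φ (insert i T) :=
  if_neg hi

lemma link_comm (φ : Finset α → ℝ) (i j : α) : link (link φ i) j = link (link φ j) i := by
  ext T
  by_cases hi : i ∈ T <;> by_cases hj : j ∈ T <;> by_cases hij : i = j <;>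
    simp [link, hi, hj, hij, Ne.symm, Finset.insert_comm]

lemma link_link_self (φ : Finset α → ℝ) (i : α) : link (link φ i) i = 0 := by
  ext T
  simp [link]

lemma link_smul (c : ℝ) (φ : Finset α → ℝ) (i : α) : link (c • φ) i = c • link φ i := by
  ext T
  simp [link]

lemma link_sq_div (φ ψ : Finset α → ℝ) (i : α) :
    link (φ ^ 2 / ψ) i = link φ i ^ 2 / link ψ i := by
  ext T
  by_cases hi : i ∈ T <;> simp [link, hi]

lemma link_nonneg {φ : Finset α → ℝ} (hφ : 0 ≤ φ) (i : α) : 0 ≤ link φ i := fun _ =>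
  ite_nonneg le_rfl (hφ _)

lemma link_eq_zero_of_link_eq_zero {φ ψ : Finset α → ℝ} (h : ∀ S, φ S = 0 → ψ S = 0) (i : α)
    (T : Finset α) : link φ i T = 0 → link ψ i T = 0 := by
  by_cases hi : i ∈ T <;> simp +contextual [link, hi, h]

lemma link_congr {φ ψ : Finset α → ℝ} {k : ℕ} (h : ∀ S, S.card = k + 1 → φ S = ψ S) (i : α)
    (T : Finset α) (hT : T.card = k) : link φ i T = link ψ i T := by
  by_cases hi : i ∈ T
  · rw [link, link, if_pos hi, if_pos hi]
  · rw [link_of_notMem hi, link_of_notMem hi, h _ (by rw [Finset.card_insert_of_notMem hi, hT])]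

lemma continuous_link (i : α) : Continuous fun w : Finset α → ℝ => link w i :=
  continuous_pi fun T => by
    by_cases hi : i ∈ T
    · simpa only [link, if_pos hi] using continuous_const
    · simpa only [link, if_neg hi] using continuous_apply (insert i T)

variable [Fintype α]

/-- The image of a weight function under the down operator, which removes an element from a set
in all possible ways. -/
def marginal (φ : Finset α → ℝ) (T : Finset α) : ℝ :=
  ∑ i, link φ i T

lemma marginal_eq_sum_compl (φ : Finset α → ℝ) (T : Finset α) :
    marginal φ T = ∑ i ∈ Tᶜ, φ (insert i T) := by
  simp only [marginal, link, Finset.sum_ite, Finset.sum_const_zero, zero_add]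
  exact Finset.sum_congr (by ext; simp) fun _ _ => rfl

lemma marginal_link (φ : Finset α → ℝ) (i : α) : marginal (link φ i) = link (marginal φ) i := by
  ext T
  simp only [marginal, link_comm φ i]
  by_cases hi : i ∈ T <;> simp [link, marginal, hi]

/-- Both sides sum over the incident pairs `i ∈ S` with `#S = k + 1`. -/
lemma sum_levelSum_link (φ : α → Finset α → ℝ) (k : ℕ) :
    ∑ i, levelSum (link (φ i) i) k = levelSum (fun S => ∑ i ∈ S, φ i S) (k + 1) := by
  rw [levelSum_sum]
  simp only [levelSum, link, Finset.sum_ite, Finset.sum_const_zero, zero_add, Finset.sum_sigma']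
  refine Finset.sum_bij' (fun p _ => ⟨insert p.2 p.1, p.2⟩) (fun p _ => ⟨p.1.erase p.2, p.2⟩)
    ?_ ?_ ?_ ?_ ?_ <;> rintro ⟨T, i⟩ hT <;>
    simp only [Finset.mem_sigma, Finset.mem_powersetCard_univ, Finset.mem_filter, Finset.mem_univ,
      true_and] at hT
  · simp [hT]
  · simp [hT, Finset.card_erase_of_mem]
  · rw [Finset.erase_insert hT.2]
  · rw [Finset.insert_erase hT.2]
  · rfl

lemma sum_mul_levelSum_link (φ : Finset α → ℝ) (h : α → ℝ) (k : ℕ) :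
    ∑ i, h i * levelSum (link φ i) k = levelSum (fun S => φ S * ∑ i ∈ S, h i) (k + 1) := by
  simp only [← levelSum_smul, ← link_smul]
  rw [sum_levelSum_link fun i => h i • φ]
  simp only [Pi.smul_apply, smul_eq_mul, Finset.mul_sum, mul_comm]

lemma sum_levelSum_link_const (φ : Finset α → ℝ) (k : ℕ) :
    ∑ i, levelSum (link φ i) k = (k + 1) * levelSum φ (k + 1) := by
  rw [sum_levelSum_link fun _ => φ, ← levelSum_smul]
  refine levelSum_congr fun S hS => ?_
  rw [Finset.sum_const, hS, nsmul_eq_mul, Pi.smul_apply, smul_eq_mul]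
  push_cast
  rfl

lemma levelSum_marginal (φ : Finset α → ℝ) (k : ℕ) :
    levelSum (marginal φ) k = (k + 1) * levelSum φ (k + 1) := by
  rw [← sum_levelSum_link_const, levelSum_sum]
  rfl

lemma levelSum_marginal_mul (φ ψ : Finset α → ℝ) (k : ℕ) :
    levelSum (marginal φ * ψ) k = levelSum (fun S => φ S * ∑ i ∈ S, ψ (S.erase i)) (k + 1) := by
  have hlink (T : Finset α) (i : α) :
      link φ i T * ψ T = link (fun S => φ S * ψ (S.erase i)) i T := by
    by_cases hi : i ∈ T <;> simp [link, hi]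
  simp only [Finset.mul_sum]
  rw [← sum_levelSum_link fun i S => φ S * ψ (S.erase i), levelSum_sum]
  refine levelSum_congr fun T _ => ?_
  simp only [Pi.mul_apply, marginal, Finset.sum_mul, hlink]

lemma sum_filter_superset (φ : Finset α → ℝ) {I : Finset α} {k : ℕ} (hI : I.card = k) :
    ∑ S with I ⊆ S ∧ S.card = k + 1, φ S = marginal φ I := by
  have himage : ({S | I ⊆ S ∧ S.card = k + 1} : Finset (Finset α))
      = Iᶜ.image fun i => insert i I := by
    ext S
    simp only [Finset.mem_filter, Finset.mem_univ, true_and, Finset.mem_image, Finset.mem_compl]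
    rw [← hI, eq_comm (a := S.card), ← Finset.exists_eq_insert_iff]
  rw [himage, Finset.sum_image (by simpa using I.insert_inj_on), marginal_eq_sum_compl]

/-- The Hessian at the all-ones point of the generating polynomial `∑ w S * x ^ S` of the sets
`S` of size `k + 2`. -/
def hessian (w : Finset α → ℝ) (k : ℕ) : Matrix α α ℝ :=
  .of fun i j => levelSum (link (link w i) j) k

lemma hessian_apply (w : Finset α → ℝ) (k : ℕ) (i j : α) :
    hessian w k i j = levelSum (link (link w i) j) k :=
  rfl

lemma hessian_isSymm (w : Finset α → ℝ) (k : ℕ) : (hessian w k).IsSymm :=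
  Matrix.IsSymm.ext fun i j => by rw [hessian_apply, hessian_apply, link_comm]

lemma hessian_smul (c : ℝ) (w : Finset α → ℝ) (k : ℕ) : hessian (c • w) k = c • hessian w k := by
  ext i j
  rw [Matrix.smul_apply, hessian_apply, link_smul, link_smul, levelSum_smul, hessian_apply,
    smul_eq_mul]

lemma hessian_link_mulVec_one (w : Finset α → ℝ) (k : ℕ) (i : α) :
    hessian (link w i) k *ᵥ 1 = (k + 1 : ℝ) • hessian w (k + 1) i := by
  ext j
  simp only [Matrix.mulVec, dotProduct, hessian_apply, Pi.one_apply, mul_one, Pi.smul_apply,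
    smul_eq_mul, sum_levelSum_link_const]

lemma sum_hessian_link (w : Finset α → ℝ) (k : ℕ) :
    ∑ i, hessian (link w i) k = (k + 1 : ℝ) • hessian w (k + 1) := by
  ext i j
  simp only [Matrix.sum_apply, Matrix.smul_apply, hessian_apply, smul_eq_mul]
  rw [← sum_levelSum_link_const]
  refine Finset.sum_congr rfl fun l _ => ?_
  rw [link_comm w l i, link_comm (link w i) l j]

lemma dotProduct_hessian_mulVec (w : Finset α → ℝ) (k : ℕ) (g h : α → ℝ) :
    g ⬝ᵥ hessian w k *ᵥ h
      = levelSum (fun S => w S * ((∑ i ∈ S, g i) * ∑ j ∈ S, h j - ∑ i ∈ S, g i * h i)) (k + 2) := by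
  have hrow (i : α) : (hessian w k *ᵥ h) i
      = levelSum (link (fun S => w S * ∑ j ∈ S.erase i, h j) i) (k + 1) := by
    simp only [Matrix.mulVec, dotProduct, hessian_apply, mul_comm _ (h _), sum_mul_levelSum_link]
    refine levelSum_congr fun S _ => ?_
    by_cases hi : i ∈ S <;> simp [link, hi]
  simp only [dotProduct, hrow, ← levelSum_smul, ← link_smul]
  rw [sum_levelSum_link fun i => g i • fun S => w S * ∑ j ∈ S.erase i, h j]
  refine levelSum_congr fun S _ => ?_
  rw [Finset.sum_mul, ← Finset.sum_sub_distrib, Finset.mul_sum]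
  refine Finset.sum_congr rfl fun i hi => ?_
  rw [Pi.smul_apply, smul_eq_mul, Finset.sum_erase_eq_sub hi]
  ring

lemma one_dotProduct_hessian_mulVec (w : Finset α → ℝ) (k : ℕ) (g : α → ℝ) :
    1 ⬝ᵥ hessian w k *ᵥ g = (k + 1) * levelSum (fun S => w S * ∑ i ∈ S, g i) (k + 2) := by
  rw [dotProduct_hessian_mulVec, ← levelSum_smul]
  refine levelSum_congr fun S hS => ?_
  simp only [Pi.one_apply, Finset.sum_const, hS, nsmul_eq_mul, mul_one, one_mul, Pi.smul_apply,
    smul_eq_mul]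
  push_cast
  ring

lemma one_dotProduct_hessian_mulVec_one (w : Finset α → ℝ) (k : ℕ) :
    1 ⬝ᵥ hessian w k *ᵥ 1 = (k + 1) * ((k + 2) * levelSum w (k + 2)) := by
  rw [one_dotProduct_hessian_mulVec, ← levelSum_smul (k + 2 : ℝ)]
  congr 1
  refine levelSum_congr fun S hS => ?_
  simp only [Pi.one_apply, Finset.sum_const, hS, nsmul_eq_mul, mul_one, Pi.smul_apply, smul_eq_mul]
  push_cast
  ring

lemma one_dotProduct_hessian_mulVec_one_nonneg {w : Finset α → ℝ} (hw : 0 ≤ w) (k : ℕ) :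
    0 ≤ 1 ⬝ᵥ hessian w k *ᵥ 1 := by
  have := levelSum_nonneg hw (k + 2)
  rw [one_dotProduct_hessian_mulVec_one]
  positivity

end Link

section LogConcave

variable {α : Type*} [Fintype α] [DecidableEq α]

/-- Log-concavity at the all-ones point of the homogeneous polynomial of degree `k + 2`
generated by the sets of size `k + 2` with weights `w`, expressed as the reversed Cauchy–Schwarz
inequality for its Hessian. -/
def LogConcave (w : Finset α → ℝ) (k : ℕ) : Prop :=
  ∀ g : α → ℝ,
    (1 ⬝ᵥ hessian w k *ᵥ 1) * (g ⬝ᵥ hessian w k *ᵥ g) ≤ (1 ⬝ᵥ hessian w k *ᵥ g) ^ 2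

lemma LogConcave.smul {w : Finset α → ℝ} {k : ℕ} (h : LogConcave w k) (c : ℝ) :
    LogConcave (c • w) k := fun g => by
  simp only [hessian_smul, Matrix.smul_mulVec, dotProduct_smul, smul_eq_mul]
  linarith [mul_le_mul_of_nonneg_left (h g) (sq_nonneg c)]

lemma hessian_congr {v w : Finset α → ℝ} {k : ℕ} (h : ∀ S, S.card = k + 2 → v S = w S) :
    hessian v k = hessian w k := by
  ext i j
  exact levelSum_congr (link_congr (link_congr h i) j)

lemma continuous_hessian (k : ℕ) : Continuous fun w : Finset α → ℝ => hessian w k :=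
  continuous_matrix fun i j => continuous_finsetSum _ fun T _ =>
    (continuous_apply T).comp ((continuous_link j).comp (continuous_link i))

lemma isClosed_setOf_logConcave (k : ℕ) : IsClosed {w : Finset α → ℝ | LogConcave w k} := by
  have hform (g h : α → ℝ) : Continuous fun w : Finset α → ℝ => g ⬝ᵥ hessian w k *ᵥ h :=
    continuous_const.dotProduct ((continuous_hessian k).matrix_mulVec continuous_const)
  simp only [LogConcave, Set.ofPred_forall]
  exact isClosed_iInter fun g =>
    isClosed_le ((hform 1 1).mul (hform g g)) ((hform 1 g).pow 2)

lemma hessian_self (w : Finset α → ℝ) (k : ℕ) (i : α) : hessian w k i i = 0 := by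
  simp [hessian_apply, link_link_self, levelSum]

lemma hessian_pos {w : Finset α → ℝ} {k : ℕ} (hw : ∀ S, S.card = k + 2 → 0 < w S)
    (hk : k + 2 ≤ Fintype.card α) {i j : α} (hij : i ≠ j) : 0 < hessian w k i j := by
  have hlink (T : Finset α) (hi : i ∉ insert j T) (hj : j ∉ T) (hT : T.card = k) :
      0 < link (link w i) j T := by
    rw [link_of_notMem hj, link_of_notMem hi]
    exact hw _ (by rw [Finset.card_insert_of_notMem hi, Finset.card_insert_of_notMem hj, hT])
  obtain ⟨T, hTsub, hT⟩ : ∃ T ⊆ ({i, j} : Finset α)ᶜ, T.card = k := by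
    refine Finset.exists_subset_card_eq ?_
    rw [Finset.card_compl, Finset.card_pair hij]
    omega
  have hTi : i ∉ insert j T := by
    intro hi
    rcases Finset.mem_insert.1 hi with hi | hi
    · exact hij hi
    · simpa using hTsub hi
  have hTj : j ∉ T := fun hj => by simpa using hTsub hj
  refine Finset.sum_pos' (fun U hU => ?_)
    ⟨T, Finset.mem_powersetCard_univ.2 hT, hlink T hTi hTj hT⟩
  by_cases hj : j ∈ U
  · simp [link, hj]
  · by_cases hi : i ∈ insert j U
    · simp [link, hi]
    · exact (hlink U hi hj (Finset.mem_powersetCard_univ.1 hU)).le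

lemma hessian_eq_zero (w : Finset α → ℝ) {k : ℕ} (hk : Fintype.card α < k + 2) :
    hessian w k = 0 := by
  rw [hessian_congr (w := 0) fun S hS => absurd (Finset.card_le_univ S) (by omega)]
  ext i j
  simp [hessian_apply, link, levelSum]

/-- With `A_i` the Hessian of the link at `i`, `1 ⬝ᵥ A_i *ᵥ g = (k + 1) (A g)_i` and
`∑ A_i = (k + 1) A`: sum the reversed Cauchy–Schwarz inequalities of the `A_i`. -/
lemma dotProduct_hessian_mulVec_le_of_logConcave_link {w : Finset α → ℝ} {k : ℕ}
    (hd : ∀ i, 0 < (hessian w (k + 1) *ᵥ 1) i) (h : ∀ i, LogConcave (link w i) k) (g : α → ℝ) :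
    g ⬝ᵥ hessian w (k + 1) *ᵥ g
      ≤ ∑ i, (hessian w (k + 1) *ᵥ g) i ^ 2 / (hessian w (k + 1) *ᵥ 1) i := by
  have hk : (0 : ℝ) < k + 1 := by positivity
  have hone (i : α) (x : α → ℝ) :
      1 ⬝ᵥ hessian (link w i) k *ᵥ x = (k + 1) * (hessian w (k + 1) *ᵥ x) i := by
    rw [dotProduct_mulVec_comm_of_isSymm (hessian_isSymm _ _), hessian_link_mulVec_one,
      dotProduct_smul, smul_eq_mul, dotProduct_comm, Matrix.mulVec]
  have hterm (i : α) : g ⬝ᵥ hessian (link w i) k *ᵥ g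
      ≤ (k + 1) * ((hessian w (k + 1) *ᵥ g) i ^ 2 / (hessian w (k + 1) *ᵥ 1) i) := by
    have hi := h i g
    rw [hone, hone] at hi
    rw [← mul_div_assoc, le_div_iff₀ (hd i)]
    refine le_of_mul_le_mul_left ?_ hk
    linarith
  have hsum : (k + 1) * (g ⬝ᵥ hessian w (k + 1) *ᵥ g)
      = ∑ i, g ⬝ᵥ hessian (link w i) k *ᵥ g := by
    rw [← smul_eq_mul, ← dotProduct_smul, ← Matrix.smul_mulVec, ← sum_hessian_link,
      Matrix.sum_mulVec, dotProduct_sum]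
  refine le_of_mul_le_mul_left ?_ hk
  rw [hsum, Finset.mul_sum]
  exact Finset.sum_le_sum fun i _ => hterm i

lemma LogConcave.of_link {w : Finset α → ℝ} {k : ℕ} (hw : ∀ S, S.card = k + 3 → 0 < w S)
    (h : ∀ i, LogConcave (link w i) k) : LogConcave w (k + 1) := fun g => by
  rcases lt_or_ge (Fintype.card α) (k + 3) with hcard | hcard
  · simp [hessian_eq_zero w hcard]
  set A := hessian w (k + 1)
  have hpos (i j : α) (hij : i ≠ j) : 0 < A i j := hessian_pos hw hcard hij
  have hnonneg (i j : α) : 0 ≤ A i j := by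
    rcases eq_or_ne i j with rfl | hij
    · exact (hessian_self w _ i).ge
    · exact (hpos i j hij).le
  have hd (i : α) : 0 < (A *ᵥ 1) i := by
    have : Nontrivial α := Fintype.one_lt_card_iff_nontrivial.1 (by omega)
    obtain ⟨j, hji⟩ := exists_ne i
    simp only [Matrix.mulVec, dotProduct, Pi.one_apply, mul_one]
    exact Finset.sum_pos' (fun j _ => hnonneg i j) ⟨j, Finset.mem_univ j, hpos i j hji.symm⟩
  refine mul_dotProduct_mulVec_le_sq_of_hyperplane (d := A *ᵥ 1) (hessian_isSymm _ _) ?_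
    (fun x hx => dotProduct_mulVec_nonpos_of_trickle_down (hessian_isSymm _ _) hpos hd
      (dotProduct_hessian_mulVec_le_of_logConcave_link hd h) hx) g
  rw [one_dotProduct]
  exact Finset.sum_nonneg fun i _ => (hd i).le

/-- Log-concavity of all derivatives of the generating polynomial of the sets of size `k`,
formulated through iterated links; in degrees `0` and `1` it is automatic. -/
def StronglyLogConcave : (Finset α → ℝ) → ℕ → Prop
  | _, 0 => True
  | _, 1 => True
  | w, k + 2 => LogConcave w k ∧ ∀ i, StronglyLogConcave (link w i) (k + 1)

lemma StronglyLogConcave.link {w : Finset α → ℝ} {k : ℕ} (h : StronglyLogConcave w (k + 1))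
    (i : α) : StronglyLogConcave (link w i) k := by
  cases k with
  | zero => trivial
  | succ k => exact h.2 i

lemma StronglyLogConcave.smul {w : Finset α → ℝ} {k : ℕ} (h : StronglyLogConcave w k) (c : ℝ) :
    StronglyLogConcave (c • w) k := by
  match k with
  | 0 => trivial
  | 1 => trivial
  | k + 2 => exact ⟨h.1.smul c, fun i => link_smul c w i ▸ (h.2 i).smul c⟩

lemma StronglyLogConcave.congr {v w : Finset α → ℝ} {k : ℕ} (h : StronglyLogConcave v k)
    (hvw : ∀ S, S.card = k → v S = w S) : StronglyLogConcave w k := by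
  match k with
  | 0 => trivial
  | 1 => trivial
  | k + 2 =>
    refine ⟨?_, fun i => (h.2 i).congr (link_congr hvw i)⟩
    rw [LogConcave, ← hessian_congr hvw]
    exact h.1

end LogConcave

section ChiSquare

variable {α : Type*} [Fintype α]

lemma two_mul_levelSum_mul_le {u w : Finset α → ℝ} (hw : 0 ≤ w) (huw : ∀ S, w S = 0 → u S = 0)
    (f : Finset α → ℝ) (k : ℕ) :
    2 * levelSum (u * f) k ≤ levelSum (u ^ 2 / w) k + levelSum (w * f ^ 2) k := by
  simp only [levelSum, Finset.mul_sum, ← Finset.sum_add_distrib]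
  refine Finset.sum_le_sum fun S _ => ?_
  simp only [Pi.mul_apply, Pi.div_apply, Pi.pow_apply]
  rcases eq_or_ne (w S) 0 with hS | hS
  · simp [hS, huw S hS]
  · have hsq : 0 ≤ w S * (u S / w S - f S) ^ 2 := mul_nonneg (hw S) (sq_nonneg _)
    have hexpand : w S * (u S / w S - f S) ^ 2
        = u S ^ 2 / w S + w S * f S ^ 2 - 2 * (u S * f S) := by
      field_simp
      ring
    linarith

lemma two_mul_levelSum_mul_add_sq_div_le {u w : Finset α → ℝ} (hw : 0 ≤ w)
    (huw : ∀ S, w S = 0 → u S = 0) (f : Finset α → ℝ) (k : ℕ) :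
    2 * levelSum (u * f) k + (levelSum (w * f) k - levelSum u k) ^ 2 / levelSum w k
      ≤ levelSum (u ^ 2 / w) k + levelSum (w * f ^ 2) k := by
  set c := (levelSum (w * f) k - levelSum u k) / levelSum w k with hc
  have hu : levelSum (u * fun S => f S - c) k = levelSum (u * f) k - c * levelSum u k := by
    simp only [levelSum, Finset.mul_sum, ← Finset.sum_sub_distrib, Pi.mul_apply]
    exact Finset.sum_congr rfl fun S _ => by ring
  have hsq : levelSum (w * (fun S => f S - c) ^ 2) k
      = levelSum (w * f ^ 2) k - 2 * c * levelSum (w * f) k + c * (c * levelSum w k) := by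
    simp only [levelSum, Finset.mul_sum, ← Finset.sum_sub_distrib, ← Finset.sum_add_distrib,
      Pi.mul_apply, Pi.pow_apply]
    exact Finset.sum_congr rfl fun S _ => by ring
  have hcw : c * (c * levelSum w k) = c * (levelSum (w * f) k - levelSum u k) := by
    rcases eq_or_ne (levelSum w k) 0 with hZ | hZ
    · simp [hc, hZ]
    · rw [hc, div_mul_cancel₀ _ hZ]
  have hmain := two_mul_levelSum_mul_le hw huw (fun S => f S - c) k
  rw [hu, hsq, hcw] at hmain
  rw [sq, mul_div_right_comm]
  linarith

variable [DecidableEq α]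

lemma levelSum_link_eq_zero_of_levelSum_eq_zero {w : Finset α → ℝ} {k : ℕ} (hw : 0 ≤ w)
    (h : levelSum w (k + 1) = 0) (i : α) : levelSum (link w i) k = 0 := by
  have hsum : ∑ j, levelSum (link w j) k = 0 := by rw [sum_levelSum_link_const, h, mul_zero]
  exact (Finset.sum_eq_zero_iff_of_nonneg fun j _ => levelSum_nonneg (link_nonneg hw j) k).1 hsum i
    (Finset.mem_univ i)

lemma levelSum_link_eq_zero {u w : Finset α → ℝ} {k : ℕ} (hw : 0 ≤ w)
    (huw : ∀ S, w S = 0 → u S = 0) {i : α} (h : levelSum (link w i) k = 0) :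
    levelSum (link u i) k = 0 :=
  Finset.sum_eq_zero fun T hT => link_eq_zero_of_link_eq_zero huw i T <|
    (Finset.sum_eq_zero_iff_of_nonneg fun U _ => link_nonneg hw i U).1 h T hT

lemma marginal_eq_zero_of_marginal_eq_zero {u w : Finset α → ℝ} (hw : 0 ≤ w)
    (huw : ∀ S, w S = 0 → u S = 0) {I : Finset α} (h : marginal w I = 0) :
    marginal u I = 0 :=
  Finset.sum_eq_zero fun i hi => link_eq_zero_of_link_eq_zero huw i I <|
    (Finset.sum_eq_zero_iff_of_nonneg fun j _ => link_nonneg hw j I).1 h i hi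

lemma LogConcave.levelSum_mul_sum_sq_le {w : Finset α → ℝ} {k : ℕ} (h : LogConcave w k)
    (g : α → ℝ) :
    (k + 2) * (levelSum w (k + 2) * levelSum (fun S => w S * (∑ i ∈ S, g i) ^ 2) (k + 2))
      ≤ (k + 1) * levelSum (fun S => w S * ∑ i ∈ S, g i) (k + 2) ^ 2
        + (k + 2) * (levelSum w (k + 2) * levelSum (fun S => w S * ∑ i ∈ S, g i ^ 2) (k + 2)) := by
  have hvar : g ⬝ᵥ hessian w k *ᵥ g = levelSum (fun S => w S * (∑ i ∈ S, g i) ^ 2) (k + 2)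
      - levelSum (fun S => w S * ∑ i ∈ S, g i ^ 2) (k + 2) := by
    simp only [dotProduct_hessian_mulVec, levelSum, ← Finset.sum_sub_distrib, mul_sub, sq]
  have hg := h g
  rw [one_dotProduct_hessian_mulVec_one, one_dotProduct_hessian_mulVec, hvar] at hg
  have hk : (0 : ℝ) < k + 1 := by positivity
  refine le_of_mul_le_mul_left ?_ hk
  linarith

/-- Compare `u / w` with `H S = ∑ i ∈ S, h i`, where `h i` is the value of
`levelSum (link u i) / levelSum (link w i)`; log-concavity controls the second moment of `H`. -/
lemma sum_sq_levelSum_link_div_le {u w : Finset α → ℝ} {k : ℕ} (hw : 0 ≤ w)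
    (huw : ∀ S, w S = 0 → u S = 0) (hlc : LogConcave w k) :
    ∑ i, levelSum (link u i) (k + 1) ^ 2 / levelSum (link w i) (k + 1)
      ≤ levelSum (u ^ 2 / w) (k + 2) + (k + 1) * (levelSum u (k + 2) ^ 2 / levelSum w (k + 2)) := by
  set W := levelSum u (k + 2)
  set Z := levelSum w (k + 2)
  set V := levelSum (u ^ 2 / w) (k + 2)
  set X := ∑ i, levelSum (link u i) (k + 1) ^ 2 / levelSum (link w i) (k + 1) with hX
  have hZnonneg : 0 ≤ Z := levelSum_nonneg hw _
  rcases hZnonneg.eq_or_lt' with hZ | hZ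
  · have hlink := levelSum_link_eq_zero_of_levelSum_eq_zero hw hZ
    have hV : 0 ≤ V := levelSum_nonneg (fun S => div_nonneg (sq_nonneg (u S)) (hw S)) _
    simpa [hX, hlink, hZ] using hV
  set h : α → ℝ := fun i => levelSum (link u i) (k + 1) / levelSum (link w i) (k + 1)
  set H : Finset α → ℝ := fun S => ∑ i ∈ S, h i
  have hmul (i : α) : h i * levelSum (link w i) (k + 1) = levelSum (link u i) (k + 1) :=
    div_mul_cancel_of_imp (levelSum_link_eq_zero hw huw)
  have huH : levelSum (u * H) (k + 2) = X :=
    (sum_mul_levelSum_link u h (k + 1)).symm.trans <|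
      Finset.sum_congr rfl fun i _ => by rw [sq, mul_div_right_comm]
  have hwsq : levelSum (fun S => w S * ∑ i ∈ S, h i ^ 2) (k + 2) = X := by
    rw [← sum_mul_levelSum_link w (fun i => h i ^ 2) (k + 1), ← huH]
    refine .trans ?_ (sum_mul_levelSum_link u h (k + 1))
    exact Finset.sum_congr rfl fun i _ => by rw [sq, mul_assoc, hmul]
  have hwH : levelSum (w * H) (k + 2) = (k + 2) * W := by
    refine (sum_mul_levelSum_link w h (k + 1)).symm.trans ?_
    simp only [hmul, sum_levelSum_link_const]
    push_cast
    ring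
  have hmoment : levelSum (w * H ^ 2) (k + 2) ≤ (k + 1) * (k + 2) * (W ^ 2 / Z) + X := by
    have hle : (k + 2) * Z * levelSum (w * H ^ 2) (k + 2)
        ≤ (k + 1) * ((k + 2) * W) ^ 2 + (k + 2) * (Z * X) := by
      rw [← hwH, ← hwsq, mul_assoc]
      exact hlc.levelSum_mul_sum_sq_le h
    refine le_of_mul_le_mul_left (hle.trans_eq ?_) (by positivity : 0 < (k + 2) * Z)
    field_simp
  have hcompare := two_mul_levelSum_mul_add_sq_div_le hw huw H (k + 2)
  rw [huH, hwH] at hcompare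
  have hshift : ((k + 2) * W - W) ^ 2 / Z = (k + 1) ^ 2 * (W ^ 2 / Z) := by ring
  linarith

/-- Contraction of the chi-square divergence by the factor `k / (k + 1)` under the down operator.
The marginals have mass `k + 1` times that of `u` and `w`, hence the shape of the coefficients. -/
theorem levelSum_marginal_sq_div_le {u w : Finset α → ℝ} {k : ℕ}
    (hslc : StronglyLogConcave w (k + 1)) (hw : 0 ≤ w) (huw : ∀ S, w S = 0 → u S = 0) :
    levelSum (marginal u ^ 2 / marginal w) k
      ≤ k * levelSum (u ^ 2 / w) (k + 1) + levelSum u (k + 1) ^ 2 / levelSum w (k + 1) := by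
  induction k generalizing u w with
  | zero =>
    have hmass (φ : Finset α → ℝ) : marginal φ ∅ = levelSum φ 1 := by
      rw [← levelSum_zero (marginal φ), levelSum_marginal]
      norm_num
    simp [levelSum_zero, hmass]
  | succ k ih =>
    set V := levelSum (u ^ 2 / w) (k + 2)
    have hlink (i : α) : levelSum (link (marginal u ^ 2 / marginal w) i) k
        ≤ k * levelSum (link (u ^ 2 / w) i) (k + 1)
          + levelSum (link u i) (k + 1) ^ 2 / levelSum (link w i) (k + 1) := by
      rw [link_sq_div, link_sq_div, ← marginal_link, ← marginal_link]
      exact ih (hslc.link i) (link_nonneg hw i) (link_eq_zero_of_link_eq_zero huw i)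
    have hsum := Finset.sum_le_sum fun i (_ : i ∈ Finset.univ) => hlink i
    rw [sum_levelSum_link_const, Finset.sum_add_distrib, ← Finset.mul_sum,
      sum_levelSum_link_const] at hsum
    have hlevel := sum_sq_levelSum_link_div_le hw huw hslc.1
    refine le_of_mul_le_mul_left ?_ (by positivity : (0 : ℝ) < k + 1)
    push_cast at hsum ⊢
    linarith

end ChiSquare

section SchurComplement

variable {α : Type*}

/-- The Schur complement of the diagonal entry `L i i`, keeping the index set; it is `L` itself
when that entry vanishes. -/
noncomputable def schurCompl (L : Matrix α α ℝ) (i : α) : Matrix α α ℝ :=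
  .of fun a b => L a b - L a i * L i b / L i i

lemma schurCompl_eq_self {L : Matrix α α ℝ} {i : α} (h : L i i = 0) : schurCompl L i = L := by
  ext a b
  simp [schurCompl, h]

lemma schurCompl_submatrix_eq {β : Type*} (L : Matrix α α ℝ) (i : α) (e : β → α) :
    (schurCompl L i).submatrix e e = L.submatrix e e
      - L.submatrix e (fun _ : Unit => i) * (L.submatrix (fun _ : Unit => i) fun _ : Unit => i)⁻¹
        * L.submatrix (fun _ : Unit => i) e := by
  ext a b
  rw [Matrix.sub_apply, Matrix.mul_apply, Fintype.sum_unique, Matrix.mul_apply, Fintype.sum_unique,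
    Matrix.inv_subsingleton]
  simp [schurCompl, div_eq_mul_inv, mul_right_comm]

lemma submatrix_sumElim_eq_fromBlocks {β : Type*} (L : Matrix α α ℝ) (i : α) (e : β → α) :
    L.submatrix (Sum.elim (fun _ : Unit => i) e) (Sum.elim (fun _ : Unit => i) e)
      = Matrix.fromBlocks (L.submatrix (fun _ => i) fun _ => i) (L.submatrix (fun _ => i) e)
          (L.submatrix e fun _ => i) (L.submatrix e e) := by
  ext (a | a) (b | b) <;> rfl

lemma det_submatrix_sumElim {β : Type*} [Fintype β] [DecidableEq β] {L : Matrix α α ℝ} {i : α}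
    (h : L i i ≠ 0) (e : β → α) :
    (L.submatrix (Sum.elim (fun _ : Unit => i) e) (Sum.elim (fun _ : Unit => i) e)).det
      = L i i * ((schurCompl L i).submatrix e e).det := by
  have hdet : (L.submatrix (fun _ : Unit => i) fun _ => i).det = L i i := Matrix.det_unique _
  let := Matrix.invertibleOfIsUnitDet (L.submatrix (fun _ : Unit => i) fun _ => i)
    (by rw [hdet]; exact h.isUnit)
  rw [submatrix_sumElim_eq_fromBlocks, Matrix.det_fromBlocks₁₁, hdet, schurCompl_submatrix_eq,
    Matrix.invOf_eq_nonsing_inv]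

lemma posSemidef_schurCompl [Finite α] {L : Matrix α α ℝ} (hL : L.PosSemidef) (i : α) :
    (schurCompl L i).PosSemidef := by
  rcases eq_or_ne (L i i) 0 with h | h
  · rwa [schurCompl_eq_self h]
  have hdet : (L.submatrix (fun _ : Unit => i) fun _ => i).det = L i i := Matrix.det_unique _
  have hA : (L.submatrix (fun _ : Unit => i) fun _ => i).PosDef :=
    (hL.submatrix _).posDef_iff_det_ne_zero.2 (hdet ▸ h)
  let := Matrix.invertibleOfIsUnitDet _ (hdet.symm ▸ h.isUnit)
  have hblocks := hL.submatrix (Sum.elim (fun _ : Unit => i) id)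
  have hrow : L.submatrix id (fun _ : Unit => i) = (L.submatrix (fun _ : Unit => i) id)ᴴ := by
    rw [Matrix.conjTranspose_submatrix, hL.isHermitian.eq]
  rw [submatrix_sumElim_eq_fromBlocks, hrow, hA.fromBlocks₁₁, ← hrow,
    ← schurCompl_submatrix_eq] at hblocks
  exact hblocks

end SchurComplement

section GramDet

variable {n : ℕ} {L : Matrix (Fin n) (Fin n) ℝ}

lemma gramDet_eq_det_submatrix {β : Type*} [Fintype β] [DecidableEq β]
    (L : Matrix (Fin n) (Fin n) ℝ) {S : Finset (Fin n)} {e : β → Fin n}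
    (he : Function.Injective e) (hS : Set.range e = S) :
    gramDet L S = (L.submatrix e e).det := by
  have hmem (b : β) : e b ∈ S := Finset.mem_coe.1 (hS ▸ Set.mem_range_self b)
  let f : β ≃ {x // x ∈ S} := .ofBijective (fun b => ⟨e b, hmem b⟩)
    ⟨fun a b hab => he (congrArg Subtype.val hab), fun x => by
      obtain ⟨b, hb⟩ : x.1 ∈ Set.range e := hS ▸ x.2
      exact ⟨b, Subtype.ext hb⟩⟩
  exact (Matrix.det_submatrix_equiv_self f _).symm

lemma gramDet_nonneg (hL : L.PosSemidef) : 0 ≤ gramDet L := fun _ =>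
  (hL.submatrix _).det_nonneg

lemma gramDet_pos (hL : L.PosDef) (S : Finset (Fin n)) : 0 < gramDet L S :=
  (hL.submatrix Subtype.val_injective).det_pos

lemma gramDet_eq_zero (hL : L.PosSemidef) {S : Finset (Fin n)} {i : Fin n} (hi : i ∈ S)
    (h : L i i = 0) : gramDet L S = 0 := by
  by_contra hdet
  have hpd := (hL.submatrix fun x : {x // x ∈ S} => x.1).posDef_iff_det_ne_zero.2 hdet
  exact (hpd.diag_pos (i := ⟨i, hi⟩)).ne' h

lemma gramDet_insert {S : Finset (Fin n)} {i : Fin n} (hi : i ∉ S) (h : L i i ≠ 0) :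
    gramDet L (insert i S) = L i i * gramDet (schurCompl L i) S := by
  rw [gramDet_eq_det_submatrix L (e := Sum.elim (fun _ : Unit => i) (Subtype.val : S → Fin n)),
    det_submatrix_sumElim h]
  · rfl
  · exact Function.Injective.sumElim (Function.injective_of_subsingleton _)
      Subtype.val_injective fun _ x hx => hi (hx ▸ x.2)
  · simp [Set.Sum.elim_range]

lemma gramDet_schurCompl_eq_zero {S : Finset (Fin n)} {i : Fin n} (hi : i ∈ S) (h : L i i ≠ 0) :
    gramDet (schurCompl L i) S = 0 :=
  Matrix.det_eq_zero_of_row_eq_zero ⟨i, hi⟩ fun j => by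
    simp [schurCompl, mul_div_cancel_left₀ _ h]

lemma link_gramDet (hL : L.PosSemidef) (i : Fin n) :
    link (gramDet L) i = L i i • gramDet (schurCompl L i) := by
  ext T
  rw [Pi.smul_apply, smul_eq_mul]
  rcases eq_or_ne (L i i) 0 with h | h
  · rw [h, zero_mul, link, gramDet_eq_zero hL (Finset.mem_insert_self i T) h, ite_self]
  · by_cases hi : i ∈ T
    · rw [gramDet_schurCompl_eq_zero hi h, mul_zero, link, if_pos hi]
    · rw [link_of_notMem hi, gramDet_insert hi h]

lemma hessian_gramDet_zero (hL : L.IsSymm) :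
    hessian (gramDet L) 0 = Matrix.vecMulVec L.diag L.diag - L ⊙ L := by
  ext i j
  rw [hessian_apply, levelSum_zero, Matrix.sub_apply, Matrix.vecMulVec_apply,
    Matrix.hadamard_apply, Matrix.diag_apply, Matrix.diag_apply, link_of_notMem (by simp)]
  rcases eq_or_ne i j with rfl | hij
  · simp [link]
  · rw [link_of_notMem (by simpa using hij),
      gramDet_eq_det_submatrix L (e := ![i, j]) (by simpa using hij) (by simp [Set.pair_comm]),
      Matrix.det_fin_two]
    simp [hL.apply i j]

lemma logConcave_gramDet_zero (hL : L.PosSemidef) : LogConcave (gramDet L) 0 := fun g => by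
  have hsymm : L.IsSymm := by
    rw [Matrix.IsSymm, ← Matrix.conjTranspose_eq_transpose_of_trivial, hL.isHermitian.eq]
  refine mul_dotProduct_mulVec_le_sq_of_hyperplane (d := L.diag) (hessian_isSymm _ _) ?_ ?_ g
  · exact one_dotProduct_hessian_mulVec_one_nonneg (gramDet_nonneg hL) 0
  · intro x hx
    rw [hessian_gramDet_zero hsymm, Matrix.sub_mulVec, Matrix.vecMulVec_mulVec, dotProduct_sub, hx]
    simpa using (hL.hadamard hL).dotProduct_mulVec_nonneg x

lemma posDef_add_smul_one (hL : L.PosSemidef) {ε : ℝ} (hε : 0 < ε) : (L + ε • 1).PosDef :=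
  Matrix.PosDef.posSemidef_add hL (Matrix.PosDef.one.smul hε)

open scoped Topology in
theorem logConcave_gramDet (hL : L.PosSemidef) (k : ℕ) : LogConcave (gramDet L) k := by
  induction k generalizing L with
  | zero => exact logConcave_gramDet_zero hL
  | succ k ih =>
    have hposDef {M : Matrix (Fin n) (Fin n) ℝ} (hM : M.PosDef) :
        LogConcave (gramDet M) (k + 1) :=
      .of_link (fun S _ => gramDet_pos hM S) fun i => by
        rw [link_gramDet hM.posSemidef]
        exact (ih (posSemidef_schurCompl hM.posSemidef i)).smul _
    have hcont : Continuous fun ε : ℝ => gramDet (L + ε • 1) :=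
      continuous_pi fun S => by
        unfold gramDet
        fun_prop
    have hlim : Filter.Tendsto (fun ε : ℝ => gramDet (L + ε • 1)) (𝓝[>] 0) (𝓝 (gramDet L)) := by
      simpa using (hcont.tendsto 0).mono_left nhdsWithin_le_nhds
    exact (isClosed_setOf_logConcave _).mem_of_tendsto hlim <|
      eventually_mem_nhdsWithin.mono fun ε hε => hposDef (posDef_add_smul_one hL hε)

theorem stronglyLogConcave_gramDet (hL : L.PosSemidef) (k : ℕ) :
    StronglyLogConcave (gramDet L) k := by
  induction k generalizing L with
  | zero => trivial
  | succ k ih =>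
    cases k with
    | zero => trivial
    | succ k =>
      refine ⟨logConcave_gramDet hL k, fun i => ?_⟩
      rw [link_gramDet hL]
      exact (ih (posSemidef_schurCompl hL i)).smul _

end GramDet

section Flow

variable {n : ℕ} {π : Finset (Fin n) → ℝ}

lemma condZ_eq_marginal (π : Finset (Fin n) → ℝ) : condZ π = marginal π :=
  funext fun I => (marginal_eq_sum_compl π I).symm

lemma sum_eq_levelSum_indicator {A : Finset (Finset (Fin n))} {k : ℕ} (hA : ∀ x ∈ A, x.card = k)
    (φ : Finset (Fin n) → ℝ) : ∑ x ∈ A, φ x = levelSum ((A : Set _).indicator φ) k :=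
  (Finset.sum_indicator_subset φ fun x hx => Finset.mem_powersetCard_univ.2 (hA x hx)).symm

lemma mul_flow_eq (π : Finset (Fin n) → ℝ) (k : ℕ) (A B : Finset (Finset (Fin n))) :
    (k + 1) * flow π (k + 1) A B = ∑ a ∈ A, π a * ∑ i ∈ a, ∑ b ∈ B,
      if a.erase i ⊆ b ∧ b.card = k + 1 then π b / marginal π (a.erase i) else 0 := by
  have hk : ((k + 1 : ℕ) : ℝ) ≠ 0 := by positivity
  simp only [flow, gibbsP, condZ_eq_marginal, ← Finset.mul_sum]
  rw [Finset.mul_sum]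
  refine Finset.sum_congr rfl fun a _ => ?_
  rw [Finset.sum_comm, mul_left_comm, ← Nat.cast_succ, ← mul_assoc (_ : ℝ) (1 / _),
    mul_one_div_cancel hk, one_mul]

lemma mul_flow_eq_levelSum {k : ℕ} {A : Finset (Finset (Fin n))} (hA : ∀ x ∈ A, x.card = k + 1)
    (B : Finset (Finset (Fin n))) :
    (k + 1) * flow π (k + 1) A B = levelSum (marginal ((A : Set _).indicator π)
      * (marginal ((B : Set _).indicator π) / marginal π)) k := by
  have hinner (I : Finset (Fin n)) (hI : I.card = k) :
      (∑ b ∈ B, if I ⊆ b ∧ b.card = k + 1 then π b / marginal π I else 0)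
        = (marginal ((B : Set _).indicator π) / marginal π) I := by
    rw [Pi.div_apply, ← sum_filter_superset ((B : Set _).indicator π) hI, Finset.sum_div,
      Finset.sum_filter, ← Finset.sum_subset (Finset.subset_univ B) fun b _ hb => by simp [hb]]
    exact Finset.sum_congr rfl fun b hb => by rw [Set.indicator_of_mem (Finset.mem_coe.2 hb)]
  have hsum : (k + 1) * flow π (k + 1) A B
      = ∑ a ∈ A, π a * ∑ i ∈ a, (marginal ((B : Set _).indicator π) / marginal π) (a.erase i) := by
    rw [mul_flow_eq]
    refine Finset.sum_congr rfl fun a ha => ?_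
    congr 1
    refine Finset.sum_congr rfl fun i hi => hinner _ ?_
    rw [Finset.card_erase_of_mem hi, hA a ha, Nat.add_sub_cancel]
  rw [hsum, sum_eq_levelSum_indicator hA, levelSum_marginal_mul]
  exact levelSum_congr fun S _ => Set.indicator_mul_left ..

lemma marginal_indicator_sdiff (π : Finset (Fin n) → ℝ) (S : Finset (Finset (Fin n))) {k : ℕ}
    {I : Finset (Fin n)} (hI : I.card = k) :
    marginal (Set.indicator ((univ.filter fun T => T.card = k + 1) \ S : Finset _) π) I
      = marginal π I - marginal ((S : Set _).indicator π) I := by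
  have hlevel (T : Finset (Fin n)) (hT : T.card = k + 1) :
      Set.indicator ((univ.filter fun T => T.card = k + 1) \ S : Finset _) π T
        = (π - (S : Set _).indicator π) T := by
    rw [← Set.indicator_compl]
    simp [Set.indicator_apply, hT]
  simp only [marginal, ← Finset.sum_sub_distrib]
  refine Finset.sum_congr rfl fun i _ => ?_
  rw [link_congr hlevel i I hI]
  by_cases hi : i ∈ I <;> simp [link, hi]

lemma mul_flow_compl_eq {k : ℕ} (hπ : 0 ≤ π) {S : Finset (Finset (Fin n))}
    (hS : ∀ x ∈ S, x.card = k + 1) :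
    (k + 1) * flow π (k + 1) S ((univ.filter fun T => T.card = k + 1) \ S)
      = (k + 1) * ∑ x ∈ S, π x
        - levelSum (marginal ((S : Set _).indicator π) ^ 2 / marginal π) k := by
  rw [mul_flow_eq_levelSum hS, sum_eq_levelSum_indicator hS, ← levelSum_marginal, levelSum,
    levelSum, levelSum, ← Finset.sum_sub_distrib]
  refine Finset.sum_congr rfl fun I hI => ?_
  rw [Pi.mul_apply, Pi.div_apply, Pi.div_apply, Pi.pow_apply,
    marginal_indicator_sdiff π S (Finset.mem_powersetCard_univ.1 hI)]
  rcases eq_or_ne (marginal π I) 0 with h | h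
  · simp [marginal_eq_zero_of_marginal_eq_zero hπ (fun _ hT =>
      Set.indicator_apply_eq_zero.2 fun _ => hT) h]
  · field_simp

/-- The indicator `u` of the event satisfies `u ^ 2 / π = u`, so both sums in the chi-square
contraction for `u` are determined by the mass of the event. -/
lemma mul_one_sub_le_mul_flow_compl {k : ℕ} (hπ : 0 ≤ π) (hsum : levelSum π (k + 1) = 1)
    (hslc : StronglyLogConcave π (k + 1)) {S : Finset (Finset (Fin n))}
    (hS : ∀ x ∈ S, x.card = k + 1) :
    (∑ x ∈ S, π x) * (1 - ∑ x ∈ S, π x)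
      ≤ (k + 1) * flow π (k + 1) S ((univ.filter fun T => T.card = k + 1) \ S) := by
  set u := (S : Set _).indicator π with hu
  have huπ (T : Finset (Fin n)) (hT : π T = 0) : u T = 0 :=
    Set.indicator_apply_eq_zero.2 fun _ => hT
  have hsq : u ^ 2 / π = u := by
    ext T
    rcases eq_or_ne (π T) 0 with hT | hT
    · simp [huπ T hT]
    · by_cases hTS : T ∈ S <;> simp [hu, hTS, sq, hT]
  have hcontract := levelSum_marginal_sq_div_le hslc hπ huπ
  rw [hsq, hsum, hu, ← sum_eq_levelSum_indicator hS] at hcontract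
  rw [mul_flow_compl_eq hπ hS]
  linarith

end Flow

section DPP

variable {n : ℕ} {L : Matrix (Fin n) (Fin n) ℝ} {k : ℕ}

lemma dpp_eq_smul (L : Matrix (Fin n) (Fin n) ℝ) {S : Finset (Fin n)} (hS : S.card = k) :
    dpp L k S = ((levelSum (gramDet L) k)⁻¹ • gramDet L) S := by
  rw [dpp, if_pos hS, Finset.univ_filter_card_eq, div_eq_inv_mul]
  rfl

lemma dpp_nonneg (hL : L.PosSemidef) : 0 ≤ dpp L k := fun S =>
  ite_nonneg (div_nonneg (gramDet_nonneg hL S) (Finset.sum_nonneg fun T _ => gramDet_nonneg hL T))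
    le_rfl

lemma sum_dpp (h : ∑ T ∈ univ.filter (fun T : Finset (Fin n) => T.card = k), gramDet L T ≠ 0) :
    ∑ T ∈ univ.filter (fun T : Finset (Fin n) => T.card = k), dpp L k T = 1 := by
  rw [← div_self h, Finset.sum_div]
  exact Finset.sum_congr rfl fun T hT => if_pos (Finset.mem_filter.1 hT).2

lemma stronglyLogConcave_dpp (hL : L.PosSemidef) : StronglyLogConcave (dpp L k) k :=
  ((stronglyLogConcave_gramDet hL k).smul _).congr fun _ hS => (dpp_eq_smul L hS).symm

end DPP

lemma div_two_mul_sq_le {p : ℝ} {k : ℕ} (hk : 1 ≤ k) (hp : 0 ≤ p) (hhalf : p ≤ 1 / 2) :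
    p / (2 * k ^ 2) ≤ p * (1 - p) / k := by
  have hk' : (1 : ℝ) ≤ k := Nat.one_le_cast.2 hk
  calc p / (2 * k ^ 2) ≤ p / (2 * k) := by gcongr; exact le_self_pow₀ hk' two_ne_zero
    _ = p * (1 / 2) / k := by field_simp
    _ ≤ p * (1 - p) / k := by gcongr; linarith

end GibbsSampler

open GibbsSampler

theorem gibbs_sampler_conductance_discrete_general {n k : ℕ} (hk : 1 ≤ k)
    {π : Finset (Fin n) → ℝ} (hπ : 0 ≤ π)
    (hsum : ∑ T ∈ univ.filter (fun T : Finset (Fin n) => T.card = k), π T = 1)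
    (hslc : StronglyLogConcave π k) {S : Finset (Finset (Fin n))} (hS : ∀ x ∈ S, x.card = k) :
    (∑ x ∈ S, π x) * (1 - ∑ x ∈ S, π x) / k
      ≤ flow π k S ((univ.filter (fun T : Finset (Fin n) => T.card = k)) \ S) := by
  obtain ⟨k, rfl⟩ := Nat.exists_eq_add_of_le' hk
  rw [Finset.univ_filter_card_eq] at hsum
  rw [div_le_iff₀' (by positivity), Nat.cast_succ]
  exact mul_one_sub_le_mul_flow_compl hπ hsum hslc hS

/-- The conductance of the Gibbs sampler for any discrete `k`-DPP is at least
`1/(Ck²)` for an absolute constant `C`, independently of the ground-set size `n`. -/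
theorem gibbs_sampler_conductance_discrete :
    ∃ C : ℝ, 0 < C ∧
      ∀ (n k : ℕ), 1 ≤ k → k ≤ n →
        ∀ L : Matrix (Fin n) (Fin n) ℝ, L.PosSemidef →
        (0 < ∑ T ∈ univ.filter (fun T : Finset (Fin n) => T.card = k), gramDet L T) →
        ∀ S : Finset (Finset (Fin n)), (∀ x ∈ S, x.card = k) →
          (∑ x ∈ S, dpp L k x) ≤ 1 / 2 →
          (∑ x ∈ S, dpp L k x) / (C * (k : ℝ) ^ 2)
            ≤ flow (dpp L k) k S
                ((univ.filter (fun T : Finset (Fin n) => T.card = k)) \ S) := by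
  refine ⟨2, two_pos, fun n k hk _ L hL hZ S hS hhalf => ?_⟩
  exact (div_two_mul_sq_le hk (Finset.sum_nonneg fun x _ => dpp_nonneg hL x) hhalf).trans
    (gibbs_sampler_conductance_discrete_general hk (dpp_nonneg hL) (sum_dpp hZ.ne')
      (stronglyLogConcave_dpp hL) hS)
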